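/- Case C, p ≡ 5 (mod 8): Let N = 2^{r0} with r0 ≥ 3 and suppose p ≡ 5 (mod 8) (so that f = 2^{r0-2} = φ(N)/2). Then there exist ε ∈ {1, -1} and integers a, b with a² + b² = p such that G(χ)² = ε · p^{2^{r0-2}-1} · √p · (a + b i). -/

import Mathlib

/-!
The proof goes up the tower of quadratic extensions `𝔽_{p^(2^n)}` of `𝔽_p`. Let `F / K` be one step,
`χ` a character of `F` of order `2^(n+3)`, where `|K| = p^(2^n)`, and `η` the quadratic character of
`F`. As `2^(n+2)` is the exact power of two dividing `|K| - 1`, we have `χ^|K| = χη`, and since the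
trace is invariant under the Frobenius, `G(χη) = G(χ)`. The duplication formula, that is
`G(χ) G(χη) χ(4) = G(χ²) G(η)`, thus becomes `G(χ)² χ(4) = G(χ²) G(η)`. The character `χ²` is the
composition of some `χ₀` of `K` with the norm, so that `G(χ²) = -G(χ₀)²` (Hasse–Davenport), while
`G(η) = ± |K|` and `χ(4)` is a fourth root of unity. Hence `G(χ)²` is `|K| G(χ₀)²` up to a unit of
`ℤ[i]`. At the bottom of the tower `χ` is a quartic character of `𝔽_p`, and `G(χ)²` is the product
of `G(χ²) = ± √p` and the Jacobi sum `J(χ, χ)`, an element of `ℤ[i]` of norm `p`.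
-/

open Complex Polynomial IntermediateField

/-- The complex primitive `p`-th root of unity `exp(2πi/p)`. -/
noncomputable def zetaP (p : ℕ) : ℂ := Complex.exp (2 * Real.pi * Complex.I / p)

/-- The Gauss sum `G(χ^λ) = ∑_{x ∈ F, x ≠ 0} χ^λ(x) ζ_p^{T(x)}`, where
`T` is the trace map from `F` down to `ZMod p`. -/
noncomputable def gaussSumN (p : ℕ) {F : Type} [Field F] [Fintype F] [Algebra (ZMod p) F]
    (χ : MulChar F ℂ) (lam : ℕ) : ℂ :=
  letI : DecidableEq F := Classical.decEq F
  ∑ x ∈ Finset.univ.filter (fun x : F => x ≠ 0),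
    (χ ^ lam) x * zetaP p ^ (Algebra.trace (ZMod p) F x).val

/-- `√-m = i√m ∈ ℂ`. -/
noncomputable def sqrtNeg (m : ℕ) : ℂ := Real.sqrt m * Complex.I

theorem sqrtNeg_sq (m : ℕ) : sqrtNeg m ^ 2 = -(m : ℂ) := by
  have h : ((Real.sqrt m : ℝ) : ℂ) ^ 2 = ((m : ℝ) : ℂ) := by
    rw [← Complex.ofReal_pow, Real.sq_sqrt (by positivity)]
  simp only [sqrtNeg, mul_pow, Complex.I_sq, h]
  push_cast
  ring

theorem isIntegral_sqrtNeg (m : ℕ) : IsIntegral ℚ (sqrtNeg m) := by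
  refine ⟨X ^ 2 + C (m : ℚ), monic_X_pow_add_C _ (by norm_num), ?_⟩
  simp [sqrtNeg_sq]

/-- The class number `h(ℚ(√-m))` of the quadratic field `ℚ(√-m) ⊆ ℂ`. -/
noncomputable def classNumSqrtNeg (m : ℕ) : ℕ :=
  haveI : FiniteDimensional ℚ ℚ⟮sqrtNeg m⟯ :=
    IntermediateField.adjoin.finiteDimensional (isIntegral_sqrtNeg m)
  haveI : CharZero ℚ⟮sqrtNeg m⟯ :=
    charZero_of_injective_algebraMap (algebraMap ℚ ℚ⟮sqrtNeg m⟯).injective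
  haveI : NumberField ℚ⟮sqrtNeg m⟯ := ⟨⟩
  NumberField.classNumber ℚ⟮sqrtNeg m⟯

/-- `√p* = √p` if `p ≡ 1 (mod 4)` and `i√p` if `p ≡ 3 (mod 4)`. -/
noncomputable def sqrtPStar (p : ℕ) : ℂ :=
  if p % 4 = 1 then (Real.sqrt p : ℂ) else (Real.sqrt p : ℂ) * Complex.I

section QuadraticCharacter

variable (F R : Type*) [Field F] [Fintype F] [CommRing R]

open Classical in
/-- The quadratic character of a finite field `F`, with its values `0, 1, -1` taken in `R` rather
than in `ℤ` so that it can be multiplied with the other `R`-valued characters. -/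
noncomputable def quadraticCharIn : MulChar F R :=
  (quadraticChar F).ringHomComp (Int.castRingHom R)

theorem isQuadratic_quadraticCharIn : (quadraticCharIn F R).IsQuadratic := by
  classical
  exact MulChar.IsQuadratic.comp (quadraticChar_isQuadratic F) _

variable {F R}

theorem quadraticCharIn_apply [DecidableEq F] (a : F) :
    quadraticCharIn F R a = (quadraticChar F a : R) := by
  rw [quadraticCharIn, MulChar.ringHomComp_apply, eq_intCast]
  congr!

theorem quadraticCharIn_eq_one_of_isSquare {a : F} (ha : a ≠ 0) (h : IsSquare a) :
    quadraticCharIn F R a = 1 := by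
  classical
  rw [quadraticCharIn_apply, (quadraticChar_one_iff_isSquare ha).mpr h, Int.cast_one]

theorem quadraticCharIn_eq_neg_one_of_not_isSquare {a : F} (h : ¬ IsSquare a) :
    quadraticCharIn F R a = -1 := by
  classical
  rw [quadraticCharIn_apply, quadraticChar_neg_one_iff_not_isSquare.mpr h, Int.cast_neg,
    Int.cast_one]

theorem quadraticCharIn_ne_one [CharZero R] (hF : ringChar F ≠ 2) : quadraticCharIn F R ≠ 1 := by
  classical
  exact (MulChar.ringHomComp_ne_one_iff Int.cast_injective).mpr (quadraticChar_ne_one hF)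

theorem eq_quadraticCharIn_of_sq_eq_one [IsDomain R] [CharZero R] (hF : ringChar F ≠ 2)
    {χ : MulChar F R} (hχ : χ ≠ 1) (hχ2 : χ ^ 2 = 1) : χ = quadraticCharIn F R := by
  obtain ⟨g, hg⟩ := IsCyclic.exists_generator (α := Fˣ)
  have apply_generator {φ : MulChar F R} (hφ : φ ≠ 1) (hφ2 : φ ^ 2 = 1) : φ g = -1 := by
    have hsq : φ g ^ 2 = 1 := by rw [← MulChar.pow_apply_coe, hφ2, MulChar.one_apply_coe]
    refine (sq_eq_one_iff.mp hsq).resolve_left fun h => hφ ?_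
    rwa [MulChar.eq_iff hg, MulChar.one_apply_coe]
  rw [MulChar.eq_iff hg, apply_generator hχ hχ2,
    apply_generator (quadraticCharIn_ne_one hF) (isQuadratic_quadraticCharIn F R).sq_eq_one]

theorem pow_eq_quadraticCharIn_of_orderOf [IsDomain R] [CharZero R] (hF : ringChar F ≠ 2)
    {χ : MulChar F R} {m : ℕ} (hdvd : orderOf χ ∣ m * 2) (hndvd : ¬ orderOf χ ∣ m) :
    χ ^ m = quadraticCharIn F R :=
  eq_quadraticCharIn_of_sq_eq_one hF (mt orderOf_dvd_of_pow_eq_one hndvd)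
    (by rwa [← pow_mul, ← orderOf_dvd_iff_pow_eq_one])

theorem sum_comp_sq (hF : ringChar F ≠ 2) (g : F → R) :
    ∑ y, g (y ^ 2) = ∑ u, (quadraticCharIn F R u + 1) * g u := by
  classical
  rw [← Finset.sum_fiberwise (s := Finset.univ) (g := fun y : F => y ^ 2)]
  refine Finset.sum_congr rfl fun u _ => ?_
  have hcard : ((Finset.univ.filter fun y : F => y ^ 2 = u).card : R) =
      quadraticCharIn F R u + 1 := by
    have h := congrArg (Int.cast : ℤ → R) (quadraticChar_card_sqrts hF u)
    rw [Set.toFinset_ofPred] at h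
    push_cast at h
    rw [quadraticCharIn_apply, ← h]
  calc ∑ y with y ^ 2 = u, g (y ^ 2) = ∑ y : F with y ^ 2 = u, g u :=
        Finset.sum_congr rfl fun y hy => by rw [(Finset.mem_filter.mp hy).2]
    _ = (quadraticCharIn F R u + 1) * g u := by rw [Finset.sum_const, nsmul_eq_mul, hcard]

theorem sum_comp_sq_add_sum_comp_mul_sq (hF : ringChar F ≠ 2) {d : F} (hd : ¬ IsSquare d)
    (g : F → R) : ∑ y, g (y ^ 2) + ∑ y, g (d * y ^ 2) = 2 * ∑ u, g u := by
  have hd0 : d ≠ 0 := by rintro rfl; exact hd IsSquare.zero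
  have twist : ∑ y, g (d * y ^ 2) = ∑ u, (-quadraticCharIn F R u + 1) * g u := by
    rw [sum_comp_sq hF fun u => g (d * u)]
    refine Fintype.sum_bijective (d * ·) (mulLeft_bijective₀ d hd0) _ _ fun u => ?_
    rw [map_mul, quadraticCharIn_eq_neg_one_of_not_isSquare hd, neg_one_mul, neg_neg]
  rw [sum_comp_sq hF, twist, ← Finset.sum_add_distrib, Finset.mul_sum]
  exact Finset.sum_congr rfl fun u _ => by ring

theorem sum_mulChar_sub_left_eq_zero [IsDomain R] {χ : MulChar F R} (hχ : χ ≠ 1) (a : F) :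
    ∑ x, χ (a - x) = 0 :=
  ((Equiv.subLeft a).sum_comp χ).trans (MulChar.sum_eq_zero_of_ne_one hχ)

end QuadraticCharacter

section Duplication

variable {F R : Type*} [Field F] [Fintype F] [CommRing R] [IsDomain R]

theorem jacobiSum_self_mul_apply_four (hF : ringChar F ≠ 2) {χ : MulChar F R} (hχ : χ ≠ 1) :
    jacobiSum χ χ * χ 4 = jacobiSum χ (quadraticCharIn F R) := by
  have h2 : (2 : F) ≠ 0 := Ring.two_ne_zero hF
  have hbij : Function.Bijective fun x : F => 1 - 2 * x :=
    (Equiv.subLeft (1 : F)).bijective.comp (mulLeft_bijective₀ 2 h2)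
  calc jacobiSum χ χ * χ 4 = ∑ x, χ (1 - (1 - 2 * x) ^ 2) := by
        rw [jacobiSum, Finset.sum_mul]
        refine Finset.sum_congr rfl fun x _ => ?_
        rw [← map_mul, ← map_mul]
        congr 1
        ring
    _ = ∑ y, χ (1 - y ^ 2) := hbij.sum_comp fun y => χ (1 - y ^ 2)
    _ = ∑ u, quadraticCharIn F R u * χ (1 - u) := by
        rw [sum_comp_sq hF fun u => χ (1 - u)]
        simp only [add_mul, one_mul, Finset.sum_add_distrib,
          sum_mulChar_sub_left_eq_zero hχ, add_zero]
    _ = jacobiSum χ (quadraticCharIn F R) := jacobiSum_comm _ _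

theorem gaussSum_mul_gaussSum_mul_quadraticCharIn (hF : ringChar F ≠ 2)
    (hcard : (Fintype.card F : R) ≠ 0) {χ : MulChar F R} (hχ : χ ^ 2 ≠ 1) {ψ : AddChar F R}
    (hψ : ψ.IsPrimitive) :
    gaussSum χ ψ * gaussSum (χ * quadraticCharIn F R) ψ * χ 4 =
      gaussSum (χ ^ 2) ψ * gaussSum (quadraticCharIn F R) ψ := by
  set η := quadraticCharIn F R
  have hχ1 : χ ≠ 1 := by rintro rfl; exact hχ (one_pow 2)
  have hη : η ^ 2 = 1 := (isQuadratic_quadraticCharIn F R).sq_eq_one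
  have hχη : χ * η ≠ 1 := fun h => hχ <|
    calc χ ^ 2 = (χ * η) ^ 2 := by rw [mul_pow, hη, mul_one]
      _ = 1 := by rw [h, one_pow]
  have hJχχ : gaussSum (χ ^ 2) ψ * jacobiSum χ χ = gaussSum χ ψ * gaussSum χ ψ := by
    rw [pow_two, jacobiSum_mul_nontrivial (by rwa [← pow_two])]
  have hJχη : gaussSum (χ * η) ψ * jacobiSum χ η = gaussSum χ ψ * gaussSum η ψ :=
    jacobiSum_mul_nontrivial hχη ψ
  apply mul_left_cancel₀ (gaussSum_ne_zero_of_nontrivial hcard hχ1 hψ)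
  calc gaussSum χ ψ * (gaussSum χ ψ * gaussSum (χ * η) ψ * χ 4)
      = gaussSum (χ ^ 2) ψ * (gaussSum (χ * η) ψ * (jacobiSum χ χ * χ 4)) := by
        linear_combination -gaussSum (χ * η) ψ * χ 4 * hJχχ
    _ = gaussSum χ ψ * (gaussSum (χ ^ 2) ψ * gaussSum η ψ) := by
        rw [jacobiSum_self_mul_apply_four hF hχ1, hJχη]
        ring

end Duplication

section Lift

variable {K F R : Type*} [Field K] [Field F] [Algebra K F] [CommRing R]

variable (F) in
/-- The lift of an additive character of `K` to an extension `F` by composition with the trace. -/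
noncomputable def traceLift (ψ : AddChar K R) : AddChar F R :=
  ψ.compAddMonoidHom (Algebra.trace K F).toAddMonoidHom

theorem traceLift_apply (ψ : AddChar K R) (x : F) :
    traceLift F ψ x = ψ (Algebra.trace K F x) := rfl

theorem traceLift_traceLift {k : Type*} [Field k] [Algebra k K] [Algebra k F] [IsScalarTower k K F]
    [FiniteDimensional k K] [FiniteDimensional K F] (ψ : AddChar k R) :
    traceLift F (traceLift K ψ) = traceLift F ψ := by
  ext x
  rw [traceLift_apply, traceLift_apply, traceLift_apply, Algebra.trace_trace]

theorem traceLift_ne_one [FiniteDimensional K F] [Algebra.IsSeparable K F] {ψ : AddChar K R}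
    (hψ : ψ ≠ 1) : traceLift F ψ ≠ 1 := by
  obtain ⟨c, hc⟩ := AddChar.ne_one_iff.mp hψ
  obtain ⟨x, rfl⟩ := Algebra.trace_surjective K F c
  exact AddChar.ne_one_iff.mpr ⟨x, hc⟩

theorem isPrimitive_traceLift [FiniteDimensional K F] [Algebra.IsSeparable K F] {ψ : AddChar K R}
    (hψ : ψ ≠ 1) : (traceLift F ψ).IsPrimitive :=
  AddChar.IsPrimitive.of_ne_one (traceLift_ne_one hψ)

variable (F) in
/-- The lift of a multiplicative character of `K` to a finite extension `F` by composition with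
the norm, as a homomorphism of character groups. -/
noncomputable def normLift [FiniteDimensional K F] : MulChar K R →* MulChar F R where
  toFun χ :=
    { toMonoidHom := χ.toMonoidHom.comp (Algebra.norm K)
      map_nonunit' := fun x hx =>
        MulChar.map_nonunit χ <| by
          rw [isUnit_iff_ne_zero, not_not] at hx ⊢
          rw [hx, Algebra.norm_zero] }
  map_one' := by
    ext x
    rw [MulChar.one_apply_coe]
    exact MulChar.one_apply (x.isUnit.map (Algebra.norm K))
  map_mul' χ χ' := MulChar.ext fun _ => rfl

theorem normLift_apply [FiniteDimensional K F] (χ : MulChar K R) (x : F) :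
    normLift F χ x = χ (Algebra.norm K x) := rfl

theorem normLift_injective [Finite F] :
    Function.Injective (normLift F : MulChar K R →* MulChar F R) := by
  intro χ χ' h
  ext c
  obtain ⟨x, hx⟩ := FiniteField.norm_surjective K F c
  rw [← hx, ← normLift_apply, ← normLift_apply, h]

theorem apply_algebraMap_pow_gcd_eq_one [Fintype K] (χ : MulChar F R) {c : K} (hc : c ≠ 0) :
    χ (algebraMap K F c) ^ (orderOf χ).gcd (Fintype.card K - 1) = 1 := by
  have hcF : algebraMap K F c ≠ 0 := by simpa using hc
  have hu : IsUnit (algebraMap K F c) := hcF.isUnit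
  refine pow_gcd_eq_one.mpr ⟨?_, ?_⟩
  · rw [← hu.unit_spec, ← MulChar.pow_apply_coe, pow_orderOf_eq_one, MulChar.one_apply_coe]
  · rw [← map_pow, ← map_pow, FiniteField.pow_card_sub_one_eq_one c hc, map_one, map_one]

variable [Fintype K]

theorem exists_normLift_eq [Finite F] {θ : MulChar F R} (hθ : θ ^ (Fintype.card K - 1) = 1) :
    ∃ χ : MulChar K R, normLift F χ = θ := by
  classical
  obtain ⟨g, hg⟩ := IsCyclic.exists_generator (α := Fˣ)
  have hNg : ∀ c, c ∈ Subgroup.zpowers (Units.map (Algebra.norm K) g) := by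
    intro c
    obtain ⟨x, rfl⟩ := FiniteField.unitsMap_norm_surjective K F c
    obtain ⟨k, rfl⟩ := hg x
    exact ⟨k, (map_zpow _ g k).symm⟩
  have hroot : θ.toUnitHom g ∈ rootsOfUnity (Fintype.card Kˣ) R := by
    rw [_root_.mem_rootsOfUnity, Units.ext_iff, Units.val_pow_eq_pow_val, MulChar.coe_toUnitHom,
      ← MulChar.pow_apply_coe, Fintype.card_units, hθ, MulChar.one_apply_coe, Units.val_one]
  refine ⟨MulChar.ofRootOfUnity hroot hNg, (MulChar.eq_iff hg _ _).mpr ?_⟩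
  rw [normLift_apply, ← MulChar.coe_toUnitHom]
  exact MulChar.ofRootOfUnity_spec hroot hNg

theorem gaussSum_pow_card [Fintype F] (χ : MulChar F R) (ψ : AddChar K R) :
    gaussSum (χ ^ Fintype.card K) (traceLift F ψ) = gaussSum χ (traceLift F ψ) := by
  refine Fintype.sum_bijective (FiniteField.frobeniusAlgEquivOfAlgebraic K F)
    (AlgEquiv.bijective _) _ _ fun x => ?_
  rw [traceLift_apply, traceLift_apply, Algebra.trace_eq_of_algEquiv,
    FiniteField.coe_frobeniusAlgEquivOfAlgebraic, map_pow,
    MulChar.pow_apply' _ Fintype.card_ne_zero]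

end Lift

section QuadraticExtension

variable {K F : Type*} [Field K] [Field F] [Algebra K F] [Algebra.IsQuadraticExtension K F]

variable (K F) in
theorem card_eq_card_sq_of_isQuadraticExtension [Fintype K] [Fintype F] :
    Fintype.card F = Fintype.card K ^ 2 := by
  rw [Module.card_eq_pow_finrank (K := K), Algebra.IsQuadraticExtension.finrank_eq_two]

variable [Finite F]

theorem algebraMap_trace_eq_add_pow_card (x : F) :
    algebraMap K F (Algebra.trace K F x) = x + x ^ Nat.card K := by
  rw [FiniteField.algebraMap_trace_eq_sum_pow, Algebra.IsQuadraticExtension.finrank_eq_two,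
    Finset.sum_range_succ, Finset.sum_range_one, pow_zero, pow_one, pow_one]

theorem algebraMap_norm_eq_mul_pow_card (x : F) :
    algebraMap K F (Algebra.norm K x) = x * x ^ Nat.card K := by
  rw [FiniteField.algebraMap_norm_eq_pow_sum, Algebra.IsQuadraticExtension.finrank_eq_two,
    Finset.sum_range_succ, Finset.sum_range_one, pow_zero, pow_one, pow_add, pow_one]

variable [Finite K]

theorem isSquare_algebraMap_of_isQuadraticExtension (d : K) : IsSquare (algebraMap K F d) := by
  have := Fintype.ofFinite K
  rcases eq_or_ne (ringChar K) 2 with hK | hK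
  · exact (FiniteField.isSquare_of_char_two hK d).map (algebraMap K F)
  · obtain ⟨x, rfl⟩ := FiniteField.norm_surjective K F d
    have hodd := Nat.odd_iff.mpr (FiniteField.odd_card_of_char_ne_two hK)
    rw [algebraMap_norm_eq_mul_pow_card, ← pow_succ', Nat.card_eq_fintype_card]
    exact hodd.add_one.isSquare_pow x

variable {d : K} (hd : ¬ IsSquare d) {s : F} (hs : s ^ 2 = algebraMap K F d)

include hd hs

theorem pow_card_eq_neg_of_sq_eq_algebraMap : s ^ Nat.card K = -s := by
  have := Fintype.ofFinite K
  have hsq : (s ^ Nat.card K) ^ 2 = s ^ 2 := by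
    rw [pow_right_comm, hs, ← map_pow, Nat.card_eq_fintype_card, FiniteField.pow_card]
  refine (sq_eq_sq_iff_eq_or_eq_neg.mp hsq).resolve_left fun hfix => hd ?_
  have h2 : (2 : K) ≠ 0 := Ring.two_ne_zero fun h => hd (FiniteField.isSquare_of_char_two h d)
  have htrace : algebraMap K F (Algebra.trace K F s) = 2 * s := by
    rw [algebraMap_trace_eq_add_pow_card, hfix, two_mul]
  have hd4 : Algebra.trace K F s ^ 2 = 2 ^ 2 * d := by
    apply (algebraMap K F).injective
    rw [map_pow, htrace, mul_pow, hs, map_mul, map_pow, map_ofNat]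
  refine ⟨Algebra.trace K F s / 2, ?_⟩
  rw [← pow_two, div_pow, hd4, mul_div_cancel_left₀ d (pow_ne_zero 2 h2)]

theorem algebraMap_add_mul_pow_card (u v : K) :
    (algebraMap K F u + algebraMap K F v * s) ^ Nat.card K =
      algebraMap K F u - algebraMap K F v * s := by
  have := Fintype.ofFinite K
  rw [Nat.card_eq_fintype_card, ← FiniteField.frobeniusAlgHom_apply K F, map_add, map_mul,
    AlgHom.commutes, AlgHom.commutes, FiniteField.frobeniusAlgHom_apply, ← Nat.card_eq_fintype_card,
    pow_card_eq_neg_of_sq_eq_algebraMap hd hs, mul_neg, sub_eq_add_neg]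

theorem trace_algebraMap_add_mul (u v : K) :
    Algebra.trace K F (algebraMap K F u + algebraMap K F v * s) = 2 * u := by
  apply (algebraMap K F).injective
  rw [algebraMap_trace_eq_add_pow_card, algebraMap_add_mul_pow_card hd hs, map_mul, map_ofNat]
  ring

theorem norm_algebraMap_add_mul (u v : K) :
    Algebra.norm K (algebraMap K F u + algebraMap K F v * s) = u ^ 2 - d * v ^ 2 := by
  apply (algebraMap K F).injective
  rw [algebraMap_norm_eq_mul_pow_card, algebraMap_add_mul_pow_card hd hs, map_sub, map_mul,
    ← hs, map_pow, map_pow]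
  ring

theorem bijective_algebraMap_add_mul :
    Function.Bijective fun z : K × K => algebraMap K F z.1 + algebraMap K F z.2 * s := by
  have := Fintype.ofFinite K
  have := Fintype.ofFinite F
  rw [Fintype.bijective_iff_injective_and_card, Fintype.card_prod,
    card_eq_card_sq_of_isQuadraticExtension K F, pow_two]
  refine ⟨?_, rfl⟩
  rintro ⟨u, v⟩ ⟨u', v'⟩ h
  have h2 : (2 : K) ≠ 0 := Ring.two_ne_zero fun h => hd (FiniteField.isSquare_of_char_two h d)
  have hs0 : s ≠ 0 := by
    rintro rfl
    rw [zero_pow two_ne_zero, eq_comm, map_eq_zero] at hs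
    exact hd (hs ▸ IsSquare.zero)
  have hu : u = u' := by
    have htrace := congrArg (Algebra.trace K F) h
    simp only [trace_algebraMap_add_mul hd hs] at htrace
    exact mul_left_cancel₀ h2 htrace
  subst hu
  have hv : v = v' := (algebraMap K F).injective (mul_right_cancel₀ hs0 (add_left_cancel h))
  rw [hv]

end QuadraticExtension

section HasseDavenport

theorem gaussSum_sq_eq_sum_sum {K R : Type*} [Field K] [Fintype K] [CommRing R]
    (hK : ringChar K ≠ 2) (χ : MulChar K R) (ψ : AddChar K R) :
    gaussSum χ ψ ^ 2 = ∑ u, ∑ v, χ (u ^ 2 - v ^ 2) * ψ (2 * u) := by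
  have h2 : (2 : K) ≠ 0 := Ring.two_ne_zero hK
  have hbij : Function.Bijective fun z : K × K => (z.1 + z.2, z.1 - z.2) := by
    refine Finite.injective_iff_bijective.mp ?_
    rintro ⟨u, v⟩ ⟨u', v'⟩ h
    obtain ⟨hadd, hsub⟩ := Prod.mk.inj h
    have hu : u = u' := mul_left_cancel₀ h2 (by linear_combination hadd + hsub)
    have hv : v = v' := mul_left_cancel₀ h2 (by linear_combination hadd - hsub)
    rw [hu, hv]
  rw [pow_two, gaussSum, Finset.sum_mul_sum, ← Fintype.sum_prod_type', ← Fintype.sum_prod_type']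
  refine (Fintype.sum_bijective _ hbij _ _ fun ⟨u, v⟩ => ?_).symm
  calc χ (u ^ 2 - v ^ 2) * ψ (2 * u) = χ ((u + v) * (u - v)) * ψ ((u + v) + (u - v)) := by
        congr 2 <;> ring
    _ = χ (u + v) * ψ (u + v) * (χ (u - v) * ψ (u - v)) := by
        rw [map_mul, AddChar.map_add_eq_mul, mul_mul_mul_comm]

variable {K F R : Type*} [Field K] [Fintype K] [Field F] [Fintype F] [Algebra K F]
  [Algebra.IsQuadraticExtension K F] [CommRing R]

theorem gaussSum_normLift_traceLift_eq_sum_sum {d : K} (hd : ¬ IsSquare d) (χ : MulChar K R)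
    (ψ : AddChar K R) :
    gaussSum (normLift F χ) (traceLift F ψ) = ∑ u, ∑ v, χ (u ^ 2 - d * v ^ 2) * ψ (2 * u) := by
  obtain ⟨s, hs⟩ := isSquare_algebraMap_of_isQuadraticExtension (F := F) d
  rw [← pow_two, eq_comm] at hs
  rw [← Fintype.sum_prod_type']
  refine (Fintype.sum_bijective _ (bijective_algebraMap_add_mul hd hs) _ _ fun z => ?_).symm
  rw [normLift_apply, traceLift_apply, norm_algebraMap_add_mul hd hs,
    trace_algebraMap_add_mul hd hs]

theorem gaussSum_normLift_traceLift [IsDomain R] (hK : ringChar K ≠ 2) {χ : MulChar K R}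
    (hχ : χ ≠ 1) (ψ : AddChar K R) :
    gaussSum (normLift F χ) (traceLift F ψ) = -gaussSum χ ψ ^ 2 := by
  obtain ⟨d, hd⟩ := FiniteField.exists_nonsquare hK
  rw [eq_neg_iff_add_eq_zero, gaussSum_normLift_traceLift_eq_sum_sum hd,
    gaussSum_sq_eq_sum_sum hK, ← Finset.sum_add_distrib]
  refine Finset.sum_eq_zero fun u _ => ?_
  have hsum : ∑ v, χ (u ^ 2 - d * v ^ 2) + ∑ v, χ (u ^ 2 - v ^ 2) = 0 := by
    rw [add_comm, sum_comp_sq_add_sum_comp_mul_sq hK hd fun w => χ (u ^ 2 - w),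
      sum_mulChar_sub_left_eq_zero hχ, mul_zero]
  rw [← Finset.sum_mul, ← Finset.sum_mul, ← add_mul, hsum, zero_mul]

end HasseDavenport

section Descent

theorem gaussSum_quadraticCharIn_sq {F R : Type*} [Field F] [Fintype F] [CommRing R] [IsDomain R]
    [CharZero R] (hF : ringChar F ≠ 2) (hcard : Fintype.card F % 4 ≠ 3) {ψ : AddChar F R}
    (hψ : ψ.IsPrimitive) : gaussSum (quadraticCharIn F R) ψ ^ 2 = Fintype.card F := by
  rw [gaussSum_sq (quadraticCharIn_ne_one hF) (isQuadratic_quadraticCharIn F R) hψ,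
    quadraticCharIn_eq_one_of_isSquare (neg_ne_zero.mpr one_ne_zero)
      (FiniteField.isSquare_neg_one_iff.mpr hcard), one_mul]

variable {K F L : Type*} [Field K] [Fintype K] [Field F] [Fintype F] [Algebra K F]
  [Algebra.IsQuadraticExtension K F] [Field L] [CharZero L]

theorem gaussSum_sq_mul_apply_four_of_normLift_eq_sq (hK : ringChar K ≠ 2) {χ : MulChar F L}
    (hχη : χ ^ (Fintype.card K - 1) = quadraticCharIn F L) {χ₀ : MulChar K L} (hχ₀ : χ₀ ≠ 1)
    (hlift : normLift F χ₀ = χ ^ 2) {ψ : AddChar K L} (hψ : ψ ≠ 1) :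
    gaussSum χ (traceLift F ψ) ^ 2 * χ 4 =
      -(gaussSum χ₀ ψ ^ 2 * gaussSum (quadraticCharIn F L) (traceLift F ψ)) := by
  have hχ : χ ^ 2 ≠ 1 := by
    rw [← hlift, ← map_one (normLift F : MulChar K L →* MulChar F L)]
    exact normLift_injective.ne hχ₀
  have hF : ringChar F ≠ 2 := Algebra.ringChar_eq K F ▸ hK
  have hcard : (Fintype.card F : L) ≠ 0 := Nat.cast_ne_zero.mpr Fintype.card_ne_zero
  have hfrob : gaussSum (χ * quadraticCharIn F L) (traceLift F ψ) = gaussSum χ (traceLift F ψ) := by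
    rw [← hχη, mul_pow_sub_one Fintype.card_ne_zero, gaussSum_pow_card]
  calc gaussSum χ (traceLift F ψ) ^ 2 * χ 4
      = gaussSum (χ ^ 2) (traceLift F ψ) * gaussSum (quadraticCharIn F L) (traceLift F ψ) := by
        rw [← gaussSum_mul_gaussSum_mul_quadraticCharIn hF hcard hχ (isPrimitive_traceLift hψ),
          hfrob, pow_two]
    _ = -(gaussSum χ₀ ψ ^ 2 * gaussSum (quadraticCharIn F L) (traceLift F ψ)) := by
        rw [← hlift, gaussSum_normLift_traceLift hK hχ₀, neg_mul]

theorem exists_gaussSum_sq_eq_mul_gaussSum_sq (hK : ringChar K ≠ 2) {χ : MulChar F L}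
    (hχ : χ ^ 2 ≠ 1) (hχη : χ ^ (Fintype.card K - 1) = quadraticCharIn F L) (hχ4 : χ 4 ^ 4 = 1)
    {ψ : AddChar K L} (hψ : ψ ≠ 1) :
    ∃ χ₀ : MulChar K L, orderOf χ₀ = orderOf (χ ^ 2) ∧ ∃ u : L, u ^ 4 = 1 ∧
      gaussSum χ (traceLift F ψ) ^ 2 = Fintype.card K * (u * gaussSum χ₀ ψ ^ 2) := by
  obtain ⟨χ₀, hχ₀⟩ : ∃ χ₀ : MulChar K L, normLift F χ₀ = χ ^ 2 := by
    apply exists_normLift_eq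
    rw [pow_right_comm, hχη, (isQuadratic_quadraticCharIn F L).sq_eq_one]
  have hχ₀1 : χ₀ ≠ 1 := by
    rintro rfl
    exact hχ (by rw [← hχ₀, map_one])
  have hF : ringChar F ≠ 2 := Algebra.ringChar_eq K F ▸ hK
  have hcardF : Fintype.card F = Fintype.card K ^ 2 := card_eq_card_sq_of_isQuadraticExtension K F
  have hmod : Fintype.card F % 4 ≠ 3 := by
    rw [hcardF, Nat.pow_mod]
    have := Nat.mod_lt (Fintype.card K) four_pos
    interval_cases Fintype.card K % 4 <;> decide
  have hG := gaussSum_sq_mul_apply_four_of_normLift_eq_sq hK hχη hχ₀1 hχ₀ hψ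
  set γ := gaussSum (quadraticCharIn F L) (traceLift F ψ)
  have hγ : γ ^ 2 = (Fintype.card K : L) ^ 2 := by
    rw [gaussSum_quadraticCharIn_sq hF hmod (isPrimitive_traceLift hψ), hcardF, Nat.cast_pow]
  have hcard : (Fintype.card K : L) ≠ 0 := Nat.cast_ne_zero.mpr Fintype.card_ne_zero
  have hχ40 : χ 4 ≠ 0 := fun h => by simp [h] at hχ4
  refine ⟨χ₀, by rw [← hχ₀, orderOf_injective _ normLift_injective],
    -γ / (Fintype.card K * χ 4), ?_, ?_⟩
  · rw [div_pow, mul_pow, hχ4, mul_one, neg_pow, pow_mul γ 2 2, hγ]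
    field_simp
  · field_simp
    linear_combination hG

end Descent

section GaussianIntegers

theorem exists_toComplex_eq_of_mem_adjoin_I {z : ℂ} (hz : z ∈ Algebra.adjoin ℤ {I}) :
    ∃ w : GaussianInt, (w : ℂ) = z := by
  have hle : Algebra.adjoin ℤ {I} ≤ GaussianInt.toComplex.toIntAlgHom.range :=
    Algebra.adjoin_singleton_le ⟨⟨0, 1⟩, by simp [GaussianInt.toComplex_def]⟩
  exact hle hz

theorem exists_norm_eq_toComplex_eq_mul {u : ℂ} (hu : u ^ 4 = 1) (z : GaussianInt) :
    ∃ w : GaussianInt, w.norm = z.norm ∧ (w : ℂ) = u * z := by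
  obtain ⟨k, -, rfl⟩ := isPrimitiveRoot_I.eq_pow_of_pow_eq_one hu
  refine ⟨⟨0, 1⟩ ^ k * z, ?_, ?_⟩
  · have hIk : Zsqrtd.norm ((⟨0, 1⟩ : GaussianInt) ^ k) = 1 :=
      (map_pow Zsqrtd.normMonoidHom _ k).trans (one_pow k)
    rw [Zsqrtd.norm_mul, hIk, one_mul]
  · rw [map_mul, map_pow, GaussianInt.toComplex_def' 0 1, Int.cast_zero, Int.cast_one, zero_add,
      one_mul]

theorem exists_norm_eq_card_toComplex_eq_jacobiSum {F : Type*} [Field F] [Fintype F]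
    {χ : MulChar F ℂ} (hχ : orderOf χ = 4) :
    ∃ z : GaussianInt, z.norm = Fintype.card F ∧ (z : ℂ) = jacobiSum χ χ := by
  have hχ4 : χ ^ 4 = 1 := hχ ▸ pow_orderOf_eq_one χ
  have hχ1 : χ ≠ 1 := fun h => by simp [h] at hχ
  have hχ2 : χ * χ ≠ 1 := fun h => by
    have := orderOf_le_of_pow_eq_one two_pos ((pow_two χ).trans h)
    omega
  obtain ⟨z, hz⟩ := exists_toComplex_eq_of_mem_adjoin_I
    (jacobiSum_mem_algebraAdjoin_of_pow_eq_one hχ4 hχ4 isPrimitiveRoot_I)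
  refine ⟨z, ?_, hz⟩
  have hring : ringChar ℂ ≠ ringChar F := by
    rw [ringChar.eq_zero]
    exact (CharP.ringChar_ne_zero_of_finite F).symm
  have hconj : jacobiSum χ⁻¹ χ⁻¹ = starRingEnd ℂ z := by
    rw [hz, ← jacobiSum_ringHomComp, ← MulChar.star_eq_inv]
    rfl
  have hnorm : (z.norm : ℂ) = Fintype.card F := by
    rw [GaussianInt.intCast_complex_norm, ← Complex.mul_conj, ← hconj, hz,
      jacobiSum_mul_jacobiSum_inv hring hχ1 hχ1 hχ2]
  exact_mod_cast hnorm

end GaussianIntegers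

section QuarticGaussSum

variable {F : Type*} [Field F] [Fintype F]

theorem ofReal_sqrt_natCast_sq (n : ℕ) : (Real.sqrt n : ℂ) ^ 2 = n := by
  rw [← ofReal_pow, Real.sq_sqrt n.cast_nonneg, ofReal_natCast]

theorem exists_gaussSum_sq_eq_sqrt_card_mul {χ : MulChar F ℂ} (hχ : orderOf χ = 4)
    {ψ : AddChar F ℂ} (hψ : ψ.IsPrimitive) :
    ∃ z : GaussianInt, z.norm = Fintype.card F ∧
      gaussSum χ ψ ^ 2 = Real.sqrt (Fintype.card F) * z := by
  have hdvd : 4 ∣ Fintype.card F - 1 := hχ ▸ χ.orderOf_dvd_card_sub_one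
  have hpos : 1 < Fintype.card F := Fintype.one_lt_card
  have hF : ringChar F ≠ 2 := fun h => by
    have := FiniteField.even_card_of_char_two h
    omega
  have hη : χ ^ 2 = quadraticCharIn F ℂ :=
    pow_eq_quadraticCharIn_of_orderOf hF (by rw [hχ]) (by rw [hχ]; decide)
  obtain ⟨z, hz, hJ⟩ := exists_norm_eq_card_toComplex_eq_jacobiSum hχ
  set r : ℂ := ((Real.sqrt (Fintype.card F) : ℝ) : ℂ)
  have hr : r ^ 2 = Fintype.card F := ofReal_sqrt_natCast_sq _
  have hr0 : r ≠ 0 := ofReal_ne_zero.mpr <|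
    Real.sqrt_ne_zero'.mpr (Nat.cast_pos.mpr Fintype.card_pos)
  have hunit : (gaussSum (quadraticCharIn F ℂ) ψ / r) ^ 4 = 1 := by
    rw [pow_mul _ 2 2, div_pow, gaussSum_quadraticCharIn_sq hF (by omega) hψ, ← hr,
      div_self (pow_ne_zero 2 hr0), one_pow]
  obtain ⟨w, hw, hwz⟩ := exists_norm_eq_toComplex_eq_mul hunit z
  refine ⟨w, hw.trans hz, ?_⟩
  calc gaussSum χ ψ ^ 2 = gaussSum (quadraticCharIn F ℂ) ψ * jacobiSum χ χ := by
        rw [← hη, pow_two χ, jacobiSum_mul_nontrivial, pow_two]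
        rw [← pow_two, hη]
        exact quadraticCharIn_ne_one hF
    _ = r * w := by rw [← hJ, hwz, ← mul_assoc, mul_div_cancel₀ _ hr0]

end QuarticGaussSum

section TwoPowerTower

theorem orderOf_natCast_zmod_two_pow {p : ℕ} (hp : p % 8 = 5) (n : ℕ) :
    orderOf (p : ZMod (2 ^ (n + 2))) = 2 ^ n := by
  have hodd : Odd ((p / 4 : ℕ) : ℤ) := by rw [Int.odd_iff]; omega
  rw [← ZMod.orderOf_one_add_four_mul _ hodd n, Int.cast_natCast]
  congr 1
  exact_mod_cast congrArg Nat.cast (show p = 1 + 4 * (p / 4) by omega)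

theorem two_pow_dvd_pow_two_pow_sub_one_iff {p : ℕ} (hp : p % 8 = 5) (m n : ℕ) :
    2 ^ (m + 2) ∣ p ^ 2 ^ n - 1 ↔ m ≤ n := by
  rw [← ZMod.natCast_eq_zero_iff, Nat.cast_pred (pow_pos (by omega) _), sub_eq_zero,
    Nat.cast_pow, ← orderOf_dvd_iff_pow_eq_one, orderOf_natCast_zmod_two_pow hp,
    Nat.pow_dvd_pow_iff_le_right']

theorem exists_intermediateField_isQuadraticExtension {k F : Type*} [Field k] [Field F] [Finite F]
    [Algebra k F] (h : 2 ∣ Module.finrank k F) :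
    ∃ K : IntermediateField k F, Algebra.IsQuadraticExtension K F := by
  obtain ⟨d, hd⟩ := h
  have hfinrank : 0 < Module.finrank k F := Module.finrank_pos
  have : NeZero d := ⟨by omega⟩
  have : Finite k := Finite.of_injective _ (algebraMap k F).injective
  have : Fact (ringChar k).Prime := ⟨CharP.char_is_prime k _⟩
  have hE : Module.finrank k (FiniteField.Extension k (ringChar k) d) = d :=
    FiniteField.finrank_extension k (ringChar k) d
  have hdvd : Module.finrank k (FiniteField.Extension k (ringChar k) d) ∣ Module.finrank k F := by
    rw [hE, hd]
    exact Nat.dvd_mul_left d 2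
  obtain ⟨φ⟩ := FiniteField.nonempty_algHom_of_finrank_dvd hdvd
  have hK : Module.finrank k φ.fieldRange = d := by
    rw [← φ.equivFieldRange.toLinearEquiv.finrank_eq, hE]
  refine ⟨φ.fieldRange, ⟨?_⟩⟩
  have := Module.finrank_mul_finrank k φ.fieldRange F
  rw [hK, hd, mul_comm 2] at this
  exact Nat.eq_of_mul_eq_mul_left (by omega) this

theorem apply_algebraMap_zmod_pow_four_eq_one {p : ℕ} [Fact p.Prime] (hp : p % 8 = 5)
    {F R : Type*} [Field F] [Algebra (ZMod p) F] [CommRing R] {χ : MulChar F R} {m : ℕ}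
    (hχ : orderOf χ = 2 ^ m) {c : ZMod p} (hc : c ≠ 0) : χ (algebraMap (ZMod p) F c) ^ 4 = 1 := by
  have hp1 : p - 1 = 4 * (p / 4) := by omega
  have hcop : Nat.Coprime (p / 4) (2 ^ m) :=
    (Nat.coprime_two_right.mpr (Nat.odd_iff.mpr (by omega))).pow_right m
  have hgcd : (2 ^ m).gcd (p - 1) ∣ 4 := by
    rw [hp1, hcop.gcd_mul_right_cancel_right]
    exact Nat.gcd_dvd_right _ _
  rw [← orderOf_dvd_iff_pow_eq_one]
  refine (orderOf_dvd_of_pow_eq_one ?_).trans hgcd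
  have h := apply_algebraMap_pow_gcd_eq_one χ hc
  rwa [hχ, ZMod.card] at h

end TwoPowerTower

section TowerInduction

variable {p : ℕ} [Fact p.Prime] {F : Type*} [Field F] [Fintype F] [Algebra (ZMod p) F]

theorem exists_isQuadraticExtension_card_eq {m : ℕ} (hcard : Fintype.card F = p ^ (m * 2)) :
    ∃ (K : IntermediateField (ZMod p) F) (_ : Fintype K),
      Algebra.IsQuadraticExtension K F ∧ Fintype.card K = p ^ m := by
  have hfinrank : Module.finrank (ZMod p) F = m * 2 := by
    apply Nat.pow_right_injective (Fact.out : p.Prime).two_le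
    dsimp only
    rw [← hcard, Module.card_eq_pow_finrank (K := ZMod p), ZMod.card]
  obtain ⟨K, hK⟩ := exists_intermediateField_isQuadraticExtension (k := ZMod p) (F := F)
    (hfinrank ▸ Nat.dvd_mul_left 2 m)
  let _ : Fintype K := Fintype.ofFinite K
  refine ⟨K, inferInstance, hK, Nat.pow_left_injective two_ne_zero ?_⟩
  dsimp only
  rw [← card_eq_card_sq_of_isQuadraticExtension K F, hcard, pow_mul]

theorem exists_gaussSum_sq_eq_pow_mul_gaussSum_sq {K : Type*} [Field K] [Fintype K]
    [Algebra (ZMod p) K] [Algebra K F] [IsScalarTower (ZMod p) K F]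
    [Algebra.IsQuadraticExtension K F] (hp : p % 8 = 5) {ψ : AddChar (ZMod p) ℂ} (hψ : ψ ≠ 1)
    {n : ℕ} (hcard : Fintype.card K = p ^ 2 ^ n) {χ : MulChar F ℂ} (hχ : orderOf χ = 2 ^ (n + 3)) :
    ∃ χ₀ : MulChar K ℂ, orderOf χ₀ = 2 ^ (n + 2) ∧ ∃ u : ℂ, u ^ 4 = 1 ∧
      gaussSum χ (traceLift F ψ) ^ 2 =
        (p : ℂ) ^ 2 ^ n * (u * gaussSum χ₀ (traceLift K ψ) ^ 2) := by
  have hK : ringChar K ≠ 2 := by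
    rw [← Algebra.ringChar_eq (ZMod p) K, ZMod.ringChar_zmod_n]
    omega
  have hF : ringChar F ≠ 2 := Algebra.ringChar_eq K F ▸ hK
  have hχη : χ ^ (Fintype.card K - 1) = quadraticCharIn F ℂ := by
    apply pow_eq_quadraticCharIn_of_orderOf hF <;> rw [hχ, hcard]
    · rw [pow_succ]
      exact Nat.mul_dvd_mul_right ((two_pow_dvd_pow_two_pow_sub_one_iff hp n n).mpr le_rfl) 2
    · exact fun h => n.not_succ_le_self ((two_pow_dvd_pow_two_pow_sub_one_iff hp (n + 1) n).mp h)
  have hχ4 : χ 4 ^ 4 = 1 := by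
    have h2 : (2 : ZMod p) ≠ 0 := Ring.two_ne_zero (by rw [ZMod.ringChar_zmod_n]; omega)
    have h := apply_algebraMap_zmod_pow_four_eq_one hp hχ (mul_ne_zero h2 h2)
    rwa [two_mul, two_add_two_eq_four, map_ofNat] at h
  have hχ2 : orderOf (χ ^ 2) = 2 ^ (n + 2) := by
    rw [orderOf_pow_of_dvd two_ne_zero (hχ ▸ dvd_pow_self 2 (n + 2).succ_ne_zero), hχ, pow_succ,
      Nat.mul_div_cancel _ two_pos]
  have hχ21 : χ ^ 2 ≠ 1 := by
    rw [Ne, ← orderOf_eq_one_iff, hχ2]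
    exact (Nat.one_lt_two_pow (n + 1).succ_ne_zero).ne'
  obtain ⟨χ₀, hχ₀, u, hu, hG⟩ :=
    exists_gaussSum_sq_eq_mul_gaussSum_sq hK hχ21 hχη hχ4 (traceLift_ne_one (F := K) hψ)
  rw [traceLift_traceLift (k := ZMod p), hcard, Nat.cast_pow] at hG
  exact ⟨χ₀, hχ₀.trans hχ2, u, hu, hG⟩

theorem exists_gaussSum_sq_eq_pow_mul_sqrt_mul (hp : p % 8 = 5) {ψ : AddChar (ZMod p) ℂ}
    (hψ : ψ ≠ 1) {n : ℕ} (hcard : Fintype.card F = p ^ 2 ^ n) {χ : MulChar F ℂ}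
    (hχ : orderOf χ = 2 ^ (n + 2)) :
    ∃ z : GaussianInt, z.norm = p ∧
      gaussSum χ (traceLift F ψ) ^ 2 = (p : ℂ) ^ (2 ^ n - 1) * Real.sqrt p * z := by
  induction n generalizing F with
  | zero =>
    rw [pow_zero, pow_one] at hcard
    obtain ⟨z, hz, hG⟩ := exists_gaussSum_sq_eq_sqrt_card_mul hχ (isPrimitive_traceLift hψ)
    rw [hcard] at hz hG
    exact ⟨z, hz, by rw [hG, pow_zero, Nat.sub_self, pow_zero, one_mul]⟩
  | succ n ih =>
    rw [pow_succ 2] at hcard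
    obtain ⟨K, _, _, hcardK⟩ := exists_isQuadraticExtension_card_eq hcard
    obtain ⟨χ₀, hχ₀, u, hu, hG⟩ := exists_gaussSum_sq_eq_pow_mul_gaussSum_sq hp hψ hcardK hχ
    obtain ⟨z, hz, hG₀⟩ := ih hcardK hχ₀
    obtain ⟨w, hw, hwz⟩ := exists_norm_eq_toComplex_eq_mul hu z
    have hexp : 2 ^ (n + 1) - 1 = 2 ^ n + (2 ^ n - 1) := by
      have := Nat.one_le_two_pow (n := n)
      omega
    refine ⟨w, hw.trans hz, ?_⟩
    rw [hG, hG₀, hwz, hexp, pow_add]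
    ring

theorem statement7_general {r0 : ℕ} (hp : p % 8 = 5) (hr0 : 2 ≤ r0)
    (hcard : Fintype.card F = p ^ orderOf (p : ZMod (2 ^ r0))) {ψ : AddChar (ZMod p) ℂ}
    (hψ : ψ ≠ 1) {χ : MulChar F ℂ} (hχ : orderOf χ = 2 ^ r0) :
    ∃ a b : ℤ, a ^ 2 + b ^ 2 = p ∧
      gaussSum χ (traceLift F ψ) ^ 2 =
        (p : ℂ) ^ (2 ^ (r0 - 2) - 1) * Real.sqrt p * (a + b * I) := by
  obtain ⟨n, rfl⟩ := Nat.exists_eq_add_of_le' hr0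
  rw [orderOf_natCast_zmod_two_pow hp] at hcard
  obtain ⟨z, hz, hG⟩ := exists_gaussSum_sq_eq_pow_mul_sqrt_mul hp hψ hcard hχ
  refine ⟨z.re, z.im, ?_, by rw [hG, GaussianInt.toComplex_def, Nat.add_sub_cancel]⟩
  rw [← hz, Zsqrtd.norm_def]
  ring

end TowerInduction

theorem zetaP_pow_val {p : ℕ} [NeZero p] (a : ZMod p) : zetaP p ^ a.val = ZMod.stdAddChar a := by
  have h := ZMod.stdAddChar_coe (N := p) (a.val : ℤ)
  rw [Int.cast_natCast, ZMod.natCast_zmod_val, Int.cast_natCast] at h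
  rw [h, zetaP, ← Complex.exp_nat_mul, mul_div_assoc', mul_comm]

theorem gaussSumN_one_eq_gaussSum {p : ℕ} [Fact p.Prime] {F : Type} [Field F] [Fintype F]
    [Algebra (ZMod p) F] (χ : MulChar F ℂ) :
    gaussSumN p χ 1 = gaussSum χ (traceLift F (ZMod.stdAddChar (N := p))) := by
  classical
  rw [gaussSumN, pow_one, gaussSum]
  refine (Finset.sum_congr rfl fun x _ => by
    rw [zetaP_pow_val, traceLift_apply]).trans (Finset.sum_filter_of_ne fun x _ hx => ?_)
  rintro rfl
  exact hx (by rw [MulChar.map_zero, zero_mul])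

theorem statement7 (p r0 N f : ℕ) (hp : p.Prime) (hr0 : 3 ≤ r0) (hN : N = 2 ^ r0)
    (hp8 : p % 8 = 5) (hNp : Nat.gcd N p = 1)
    (hf : orderOf (p : ZMod N) = f)
    (F : Type) [Field F] [Fintype F] [Algebra (ZMod p) F]
    (hcard : Fintype.card F = p ^ f)
    (χ : MulChar F ℂ) (hχord : orderOf χ = N) :
    ∃ ε : ℂ, (ε = 1 ∨ ε = -1) ∧
      ∃ a b : ℤ, a ^ 2 + b ^ 2 = (p : ℤ) ∧
        (gaussSumN p χ 1) ^ 2 =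
          ε * (p : ℂ) ^ ((2 ^ (r0 - 2) - 1 : ℕ)) * (Real.sqrt p : ℂ) *
            ((a : ℂ) + (b : ℂ) * Complex.I) := by
  have := Fact.mk hp
  subst hN hf
  have hψ : (ZMod.stdAddChar : AddChar (ZMod p) ℂ) ≠ 1 := by
    simpa only [AddChar.mulShift_one] using ZMod.isPrimitive_stdAddChar p one_ne_zero
  obtain ⟨a, b, hab, hG⟩ := statement7_general hp8 (by omega) hcard hψ hχord
  exact ⟨1, .inl rfl, a, b, hab, by rw [gaussSumN_one_eq_gaussSum, hG, one_mul]⟩
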